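/- (Paper's Lemma 1) For every real x with 0 ≤ x ≤ 1 − 1/N, the truncated degree distribution satisfies ρ^N(x) ≥ (μ + S_p(x)) / (μ + G_N(p) + 1), with strict inequality whenever 0 < x ≤ 1 − 1/N. -/

import Mathlib

open Real Filter

noncomputable def qp (p x : ℝ) : ℝ :=
  (Real.sqrt ((1 - p) ^ 2 + 4 * p * x) - (1 - p)) / (2 * p)

noncomputable def aCoeff (p : ℝ) (i : ℕ) : ℝ :=
  (∑ k ∈ Finset.range i, (Nat.choose (2 * i - 1) k : ℝ) * p ^ k) /
    (i * (1 + p) ^ (2 * i - 1))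

noncomputable def Gpart (p : ℝ) (N : ℕ) : ℝ := ∑ i ∈ Finset.Icc 1 N, aCoeff p i

noncomputable def Sp (p x : ℝ) : ℝ := - Real.log (qp p (1 - x))

noncomputable def rhoN (p μ : ℝ) (N : ℕ) (x : ℝ) : ℝ :=
  (μ + (∑ i ∈ Finset.Icc 1 N, aCoeff p i * x ^ i) + x ^ N) / (μ + Gpart p N + 1)

noncomputable def lamBarN (p μ : ℝ) (N : ℕ) (x : ℝ) : ℝ :=
  Real.exp (-(μ + Gpart p N + 1) * rhoN p μ N (1 - x))

noncomputable def deSym (p μ : ℝ) (N : ℕ) (x : ℝ) : ℝ :=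
  ((1 - p) + p * lamBarN p μ N x) * lamBarN p μ N x

noncomputable def cornerMap (p μ : ℝ) (N : ℕ) (α ε₁ ε₂ : ℝ) (y : ℝ) : ℝ :=
  ((1 - p) + p * Real.exp (-(α * (1 - ε₁)))) *
    Real.exp (-(α * (1 - ε₂)) * rhoN p μ N (1 - y))

/-!
Writing `S_p(x) = ∑ a_i x ^ i`, the truncation drops the tail `∑_{i > N} a_i x ^ i`, and the extra
term `x ^ N` more than pays for it: `i * a_i` is the probability of a minority of successes in
`2 * i - 1` trials, so `a_i < 1 / i`, and the tail is less than
`x ^ (N + 1) / ((N + 1) * (1 - x)) ≤ x ^ N`.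

For the expansion of `S_p`, Pascal's rule gives
`(i + 1) * a_{i+1} = 1 / 2 + (1 - p) / (2 * (1 + p)) * ∑_{k ≤ i} binom(2k, k) * w ^ k` with
`w = p / (1 + p) ^ 2`. Since `∑ binom(2k, k) * z ^ k = 1 / √(1 - 4 * z)` and taking partial sums of
coefficients divides a power series by `1 - x`, the termwise derivative sums to `S_p'`.
-/

section PowerSeries

theorem succ_mul_multichoose_succ {R : Type*} [CommRing R] [BinomialRing R] (a : R) (n : ℕ) :
    (n + 1) * Ring.multichoose a (n + 1) = (a + n) * Ring.multichoose a n := by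
  have factorial_mul (m : ℕ) : (m.factorial : R) * Ring.multichoose a m =
      (ascPochhammer R m).eval a := by
    rw [← nsmul_eq_mul, Ring.factorial_nsmul_multichoose_eq_ascPochhammer,
      Polynomial.ascPochhammer_smeval_eq_eval]
  have : IsAddTorsionFree R := BinomialRing.toIsAddTorsionFree
  refine nsmul_right_injective n.factorial_ne_zero ?_
  simp only [nsmul_eq_mul]
  calc (n.factorial : R) * ((n + 1) * Ring.multichoose a (n + 1))
      = (n + 1).factorial * Ring.multichoose a (n + 1) := by
        rw [Nat.factorial_succ, Nat.cast_mul, Nat.cast_succ]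
        ring
    _ = n.factorial * Ring.multichoose a n * (a + n) := by
        rw [factorial_mul, factorial_mul, ascPochhammer_succ_eval]
    _ = n.factorial * ((a + n) * Ring.multichoose a n) := by ring

theorem multichoose_half_mul_four_pow {K : Type*} [Field K] [CharZero K] (n : ℕ) :
    Ring.multichoose (1 / 2 : K) n * 4 ^ n = n.centralBinom := by
  induction n with
  | zero => simp
  | succ n ih =>
    have hcentral : ((n : K) + 1) * (n + 1).centralBinom = 2 * (2 * n + 1) * n.centralBinom := by
      exact_mod_cast n.succ_mul_centralBinom_succ
    refine mul_left_cancel₀ (Nat.cast_add_one_ne_zero n : (n : K) + 1 ≠ 0) ?_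
    rw [hcentral, ← ih, ← mul_assoc, succ_mul_multichoose_succ]
    ring

theorem hasSum_centralBinom_mul_pow {z : ℝ} (hz : |4 * z| < 1) :
    HasSum (fun n : ℕ => (n.centralBinom : ℝ) * z ^ n) (1 / √(1 - 4 * z)) := by
  have hmem : 4 * z ∈ Metric.eball (0 : ℝ) 1 := by
    rw [← ENNReal.ofReal_one, Metric.eball_ofReal]
    exact mem_ball_zero_iff.mpr hz
  have hsum := (Real.one_div_one_sub_rpow_hasFPowerSeriesOnBall_zero (1 / 2)).hasSum hmem
  simp only [FormalMultilinearSeries.ofScalars_apply_eq, zero_add, ← Real.sqrt_eq_rpow,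
    ← Ring.multichoose_eq, smul_eq_mul, mul_pow, ← mul_assoc,
    multichoose_half_mul_four_pow] at hsum
  exact hsum

theorem hasSum_sum_range_mul_pow {𝕜 : Type*} [NormedField 𝕜] [CompleteSpace 𝕜] {a : ℕ → 𝕜}
    {x s : 𝕜} (hx : ‖x‖ < 1) (ha : HasSum (fun n => a n * x ^ n) s)
    (hnorm : Summable fun n => ‖a n * x ^ n‖) :
    HasSum (fun n => (∑ i ∈ Finset.range (n + 1), a i) * x ^ n) (s / (1 - x)) := by
  have hcauchy := hasSum_sum_range_mul_of_summable_norm hnorm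
    (summable_norm_geometric_of_norm_lt_one hx)
  rw [ha.tsum_eq, tsum_geometric_of_norm_lt_one hx, ← div_eq_mul_inv] at hcauchy
  refine hcauchy.congr_fun fun n => ?_
  rw [Finset.sum_mul]
  refine Finset.sum_congr rfl fun i hi => ?_
  rw [mul_assoc, pow_mul_pow_sub x (Finset.mem_range_succ_iff.mp hi)]

theorem hasSum_mul_pow_succ_of_hasDerivAt {𝕜 : Type*} [RCLike 𝕜] {f f' : 𝕜 → 𝕜} {a : ℕ → 𝕜}
    {r : ℝ} (hf : ∀ y ∈ Metric.ball 0 r, HasDerivAt f (f' y) y)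
    (ha : ∀ y ∈ Metric.ball 0 r, HasSum (fun n => a n * (n + 1) * y ^ n) (f' y))
    {x : 𝕜} (hx : x ∈ Metric.ball 0 r) :
    HasSum (fun n => a n * x ^ (n + 1)) (f x - f 0) := by
  obtain ⟨ρ, hxρ, hρr⟩ := exists_between (mem_ball_zero_iff.mp hx)
  have hρ : ‖(ρ : 𝕜)‖ = ρ := RCLike.norm_of_nonneg ((norm_nonneg x).trans hxρ.le)
  have hsub : Metric.ball (0 : 𝕜) ρ ⊆ Metric.ball 0 r := Metric.ball_subset_ball hρr.le
  have hpre : IsPreconnected (Metric.ball (0 : 𝕜) ρ) := (convex_ball 0 ρ).isPreconnected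
  have hzero : (0 : 𝕜) ∈ Metric.ball 0 ρ := Metric.mem_ball_self ((norm_nonneg x).trans_lt hxρ)
  have hx' : x ∈ Metric.ball 0 ρ := mem_ball_zero_iff.mpr hxρ
  have hbound : Summable fun n => ‖a n * (n + 1) * (ρ : 𝕜) ^ n‖ :=
    (ha ρ (mem_ball_zero_iff.mpr (hρ.trans_lt hρr))).summable.norm
  have hterm (n : ℕ) (y : 𝕜) (_ : y ∈ Metric.ball 0 ρ) :
      HasDerivAt (fun y => a n * y ^ (n + 1)) (a n * (n + 1) * y ^ n) y := by
    simpa [mul_assoc] using (hasDerivAt_pow (n + 1) y).const_mul (a n)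
  have hterm_le (n : ℕ) (y : 𝕜) (hy : y ∈ Metric.ball 0 ρ) :
      ‖a n * (n + 1) * y ^ n‖ ≤ ‖a n * (n + 1) * (ρ : 𝕜) ^ n‖ := by
    rw [norm_mul, norm_mul _ ((ρ : 𝕜) ^ n), norm_pow, norm_pow, hρ]
    gcongr
    exact (mem_ball_zero_iff.mp hy).le
  have hsummable_zero : Summable fun n => a n * (0 : 𝕜) ^ (n + 1) := by simp
  have hderiv (y : 𝕜) (hy : y ∈ Metric.ball 0 ρ) :
      HasDerivAt (fun y => ∑' n, a n * y ^ (n + 1)) (f' y) y := by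
    rw [← (ha y (hsub hy)).tsum_eq]
    exact hasDerivAt_tsum_of_isPreconnected hbound Metric.isOpen_ball hpre hterm hterm_le hzero
      hsummable_zero hy
  have hf_sub (y : 𝕜) (hy : y ∈ Metric.ball 0 ρ) : HasDerivAt (fun y => f y - f 0) (f' y) y :=
    (hf y (hsub hy)).sub_const (f 0)
  have htsum : ∑' n, a n * x ^ (n + 1) = f x - f 0 := Metric.isOpen_ball.eqOn_of_deriv_eq hpre
    (fun y hy => (hderiv y hy).differentiableAt.differentiableWithinAt)
    (fun y hy => (hf_sub y hy).differentiableAt.differentiableWithinAt)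
    (fun y hy => (hderiv y hy).deriv.trans (hf_sub y hy).deriv.symm) hzero (by simp) hx'
  have hsummable := summable_of_summable_hasDerivAt_of_isPreconnected hbound Metric.isOpen_ball
    hpre hterm hterm_le hzero hsummable_zero hx'
  rw [← htsum]
  exact hsummable.hasSum

end PowerSeries

section BinomialTail

theorem sum_range_choose_succ_mul_pow {R : Type*} [CommRing R] (p : R) (n m : ℕ) :
    ∑ k ∈ Finset.range (m + 1), ((n + 1).choose k : R) * p ^ k =
      (1 + p) * ∑ k ∈ Finset.range (m + 1), (n.choose k : R) * p ^ k -
        (n.choose m : R) * p ^ (m + 1) := by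
  induction m with
  | zero => simp
  | succ m ih =>
    rw [Finset.sum_range_succ, ih, Finset.sum_range_succ _ (m + 1), Nat.choose_succ_succ]
    push_cast
    ring

/-- The probability of at most `j` successes in `2 * j + 1` independent trials whose odds of
success are `p : 1`. It is the coefficient of `x ^ j` in the derivative of `Sp p`. -/
noncomputable def minorityProb (p : ℝ) (j : ℕ) : ℝ :=
  (∑ k ∈ Finset.range (j + 1), ((2 * j + 1).choose k : ℝ) * p ^ k) / (1 + p) ^ (2 * j + 1)

theorem minorityProb_lt_one {p : ℝ} (hp : 0 < p) (j : ℕ) : minorityProb p j < 1 := by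
  have hbinom : (1 + p) ^ (2 * j + 1) =
      ∑ k ∈ Finset.range (2 * j + 2), ((2 * j + 1).choose k : ℝ) * p ^ k := by
    rw [add_comm, add_pow]
    simp only [one_pow, mul_one, mul_comm]
  rw [minorityProb, div_lt_one (by positivity), hbinom]
  have hchoose : 0 < (2 * j + 1).choose (j + 1) := Nat.choose_pos (by lia)
  exact Finset.sum_lt_sum_of_subset (Finset.range_mono (by lia)) (i := j + 1)
    (Finset.mem_range.mpr (by lia)) Finset.notMem_range_self (by positivity)
    fun k _ _ => by positivity

theorem minorityProb_succ {p : ℝ} (hp : 1 + p ≠ 0) (j : ℕ) :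
    minorityProb p (j + 1) = minorityProb p j + (1 - p) / (2 * (1 + p)) *
      ((j + 1).centralBinom * (p / (1 + p) ^ 2) ^ (j + 1)) := by
  have hchoose_even : ((2 * j + 1 + 1).choose (j + 1) : ℝ) = (j + 1).centralBinom := by
    rw [Nat.centralBinom_eq_two_mul_choose]
    rfl
  have hchoose_odd : ((2 * j + 1).choose (j + 1) : ℝ) = (j + 1).centralBinom / 2 := by
    rw [← hchoose_even, Nat.choose_succ_succ (2 * j + 1) j, Nat.choose_symm_half]
    push_cast
    ring
  have hnum : ∑ k ∈ Finset.range (j + 1 + 1), ((2 * (j + 1) + 1).choose k : ℝ) * p ^ k =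
      (1 + p) ^ 2 * ∑ k ∈ Finset.range (j + 1), ((2 * j + 1).choose k : ℝ) * p ^ k +
        (1 - p) * ((j + 1).centralBinom / 2) * p ^ (j + 1) := by
    rw [show 2 * (j + 1) + 1 = 2 * j + 1 + 1 + 1 by ring, sum_range_choose_succ_mul_pow,
      sum_range_choose_succ_mul_pow, Finset.sum_range_succ, hchoose_even, hchoose_odd]
    ring
  rw [minorityProb, minorityProb, hnum, div_pow, ← pow_mul,
    show 2 * (j + 1) + 1 = 2 * j + 1 + 2 by ring, show 2 * (j + 1) = 2 * j + 1 + 1 by ring,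
    pow_add _ (2 * j + 1) 2, pow_succ _ (2 * j + 1)]
  field_simp

theorem minorityProb_eq_half_add_sum {p : ℝ} (hp : 1 + p ≠ 0) (j : ℕ) :
    minorityProb p j = 1 / 2 + (1 - p) / (2 * (1 + p)) *
      ∑ i ∈ Finset.range (j + 1), (i.centralBinom : ℝ) * (p / (1 + p) ^ 2) ^ i := by
  induction j with
  | zero =>
    have hbase : minorityProb p 0 = 1 / (1 + p) := by simp [minorityProb]
    rw [hbase, zero_add, Finset.sum_range_one, Nat.centralBinom_zero, Nat.cast_one, pow_zero]
    field_simp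
    ring
  | succ j ih =>
    rw [minorityProb_succ hp, ih, Finset.sum_range_succ _ (j + 1)]
    ring

theorem one_div_sqrt_one_sub_four_mul {p : ℝ} (hp : 0 < 1 + p) (x : ℝ) :
    1 / √(1 - 4 * (p / (1 + p) ^ 2 * x)) = (1 + p) / √((1 - p) ^ 2 + 4 * p * (1 - x)) := by
  have hsq : 1 - 4 * (p / (1 + p) ^ 2 * x) =
      ((1 - p) ^ 2 + 4 * p * (1 - x)) / (1 + p) ^ 2 := by
    field_simp
    ring
  rw [hsq, Real.sqrt_div' _ (by positivity), Real.sqrt_sq hp.le, one_div_div]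

theorem hasSum_minorityProb_mul_pow {p x : ℝ} (hp : 0 < p) (hx : |x| < 1) :
    HasSum (fun j => minorityProb p j * x ^ j)
      ((1 / 2 + (1 - p) / (2 * √((1 - p) ^ 2 + 4 * p * (1 - x)))) / (1 - x)) := by
  have hp' : 0 < 1 + p := by positivity
  have hz : |4 * (p / (1 + p) ^ 2 * x)| < 1 := by
    have hAMGM : 4 * (p / (1 + p) ^ 2) ≤ 1 := by
      rw [← mul_div_assoc, div_le_one (by positivity)]
      simpa using four_mul_le_sq_add 1 p
    rw [← mul_assoc, abs_mul, abs_of_pos (by positivity : 0 < 4 * (p / (1 + p) ^ 2))]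
    exact (mul_le_of_le_one_left (abs_nonneg x) hAMGM).trans_lt hx
  have hcentral := hasSum_centralBinom_mul_pow hz
  rw [one_div_sqrt_one_sub_four_mul hp'] at hcentral
  simp only [mul_pow _ x, ← mul_assoc] at hcentral
  have hpartial := (hasSum_sum_range_mul_pow hx hcentral hcentral.summable.norm).mul_left
    ((1 - p) / (2 * (1 + p)))
  have hvalue : (1 / 2 + (1 - p) / (2 * √((1 - p) ^ 2 + 4 * p * (1 - x)))) / (1 - x) =
      1 / 2 * (1 - x)⁻¹ + (1 - p) / (2 * (1 + p)) *
        ((1 + p) / √((1 - p) ^ 2 + 4 * p * (1 - x)) / (1 - x)) := by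
    field_simp
  rw [hvalue]
  refine (((hasSum_geometric_of_abs_lt_one hx).mul_left (1 / 2)).add hpartial).congr_fun
    fun j => ?_
  rw [minorityProb_eq_half_add_sum hp'.ne']
  ring

end BinomialTail

section Generator

theorem aCoeff_nonneg {p : ℝ} (hp : 0 ≤ p) (i : ℕ) : 0 ≤ aCoeff p i := by
  unfold aCoeff
  positivity

theorem Gpart_nonneg {p : ℝ} (hp : 0 ≤ p) (N : ℕ) : 0 ≤ Gpart p N :=
  Finset.sum_nonneg fun i _ => aCoeff_nonneg hp i

theorem aCoeff_succ_mul (p : ℝ) (j : ℕ) : aCoeff p (j + 1) * (j + 1) = minorityProb p j := by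
  have hj : (j : ℝ) + 1 ≠ 0 := j.cast_add_one_ne_zero
  rw [aCoeff, minorityProb, show 2 * (j + 1) - 1 = 2 * j + 1 by lia, Nat.cast_succ,
    mul_comm ((j : ℝ) + 1), ← div_div, div_mul_cancel₀ _ hj]

theorem aCoeff_succ_lt {p : ℝ} (hp : 0 < p) (j : ℕ) : aCoeff p (j + 1) < 1 / (j + 1) := by
  rw [lt_div_iff₀ (by positivity), aCoeff_succ_mul]
  exact minorityProb_lt_one hp j

theorem Sp_zero {p : ℝ} (hp : 0 < p) : Sp p 0 = 0 := by
  have hsq : (1 - p) ^ 2 + 4 * p * (1 - 0) = (1 + p) ^ 2 := by ring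
  rw [Sp, qp, hsq, Real.sqrt_sq (by positivity), show 1 + p - (1 - p) = 2 * p by ring,
    div_self (by positivity), Real.log_one, neg_zero]

theorem hasDerivAt_Sp {p x : ℝ} (hp : 0 < p) (hx : x < 1) :
    HasDerivAt (Sp p)
      ((1 / 2 + (1 - p) / (2 * √((1 - p) ^ 2 + 4 * p * (1 - x)))) / (1 - x)) x := by
  have hpx : 0 < 4 * p * (1 - x) := mul_pos (by positivity) (sub_pos.mpr hx)
  have hdiscr : 0 < (1 - p) ^ 2 + 4 * p * (1 - x) := by positivity
  have hlin : HasDerivAt (fun t : ℝ => (1 - p) ^ 2 + 4 * p * (1 - t)) (4 * p * (-1)) x :=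
    (((hasDerivAt_id x).const_sub 1).const_mul (4 * p)).const_add _
  have hqp : HasDerivAt (fun t : ℝ => qp p (1 - t)) _ x :=
    ((hlin.sqrt hdiscr.ne').sub_const (1 - p)).div_const (2 * p)
  have habs : |1 - p| < √((1 - p) ^ 2 + 4 * p * (1 - x)) :=
    Real.lt_sqrt_of_sq_lt (by rw [sq_abs]; linarith)
  obtain ⟨hneg_lt, hlt⟩ := abs_lt.mp habs
  have hqp_pos : 0 < qp p (1 - x) := div_pos (sub_pos.mpr hlt) (by positivity)
  refine (hqp.log hqp_pos.ne').neg.congr_deriv ?_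
  have hsq := Real.sq_sqrt hdiscr.le
  unfold qp
  generalize √((1 - p) ^ 2 + 4 * p * (1 - x)) = r at *
  have hfactor : 1 - x = (r - (1 - p)) * (r + (1 - p)) / (4 * p) := by
    field_simp
    linarith
  have hr : r ≠ 0 := by linarith
  have hsub : r - (1 - p) ≠ 0 := (sub_pos.mpr hlt).ne'
  have hadd : r + (1 - p) ≠ 0 := by linarith
  rw [hfactor]
  field_simp

theorem hasSum_aCoeff_mul_pow {p x : ℝ} (hp : 0 < p) (hx : |x| < 1) :
    HasSum (fun j => aCoeff p (j + 1) * x ^ (j + 1)) (Sp p x) := by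
  rw [← sub_zero (Sp p x), ← Sp_zero hp]
  refine hasSum_mul_pow_succ_of_hasDerivAt (r := 1)
    (fun y hy => hasDerivAt_Sp hp (lt_of_abs_lt (mem_ball_zero_iff.mp hy))) (fun y hy => ?_)
    (mem_ball_zero_iff.mpr hx)
  simp only [aCoeff_succ_mul]
  exact hasSum_minorityProb_mul_pow hp (mem_ball_zero_iff.mp hy)

theorem Sp_lt_sum_add {p x : ℝ} (hp : 0 < p) (hx0 : 0 < x) (hx1 : x < 1) (N : ℕ) :
    Sp p x < ∑ i ∈ Finset.Icc 1 N, aCoeff p i * x ^ i + x ^ (N + 1) / ((N + 1) * (1 - x)) := by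
  have htail := (hasSum_nat_add_iff' N).mpr
    (hasSum_aCoeff_mul_pow hp ((abs_of_pos hx0).trans_lt hx1))
  have hgeom := (hasSum_geometric_of_lt_one hx0.le hx1).mul_left (x ^ (N + 1) / (N + 1))
  have hterm (j : ℕ) : aCoeff p (j + N + 1) * x ^ (j + N + 1) < x ^ (N + 1) / (N + 1) * x ^ j :=
    calc aCoeff p (j + N + 1) * x ^ (j + N + 1)
        < 1 / ((j + N : ℕ) + 1) * x ^ (j + N + 1) := by
          gcongr
          exact aCoeff_succ_lt hp (j + N)
      _ ≤ 1 / (N + 1) * x ^ (j + N + 1) := by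
          gcongr
          exact Nat.le_add_left N j
      _ = x ^ (N + 1) / (N + 1) * x ^ j := by ring
  have hlt := hasSum_lt (fun j => (hterm j).le) (hterm 0) htail hgeom
  rwa [← div_eq_mul_inv, div_div, sub_lt_iff_lt_add', Finset.range_eq_Ico,
    Finset.sum_Ico_add' (fun i => aCoeff p i * x ^ i) 0 N 1, zero_add,
    Finset.Ico_add_one_right_eq_Icc] at hlt

theorem pow_succ_div_le_pow {x : ℝ} {N : ℕ} (hx0 : 0 ≤ x) (hx : x ≤ 1 - 1 / ((N : ℝ) + 2)) :
    x ^ (N + 1) / ((N + 1) * (1 - x)) ≤ x ^ N := by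
  have hx1 : 0 < 1 - x := sub_pos.mpr (hx.trans_lt (sub_lt_self 1 (by positivity)))
  have hone : 1 ≤ (1 - x) * ((N : ℝ) + 2) := (div_le_iff₀ (by positivity)).mp (le_sub_comm.mp hx)
  have hle : x ≤ (N + 1) * (1 - x) := by linarith
  rw [div_le_iff₀ (by positivity), pow_succ]
  gcongr

end Generator

theorem stmt7_general {p μ : ℝ} (hp : 0 < p) {N : ℕ} (hden : 0 < μ + Gpart p N + 1) {x : ℝ}
    (hx0 : 0 ≤ x) (hx : x ≤ 1 - 1 / ((N : ℝ) + 2)) :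
    (μ + Sp p x) / (μ + Gpart p N + 1) ≤ rhoN p μ N x ∧
      (0 < x → (μ + Sp p x) / (μ + Gpart p N + 1) < rhoN p μ N x) := by
  rw [rhoN, div_le_div_iff_of_pos_right hden, div_lt_div_iff_of_pos_right hden, add_assoc,
    add_le_add_iff_left, add_lt_add_iff_left]
  have hstrict (hpos : 0 < x) :
      Sp p x < ∑ i ∈ Finset.Icc 1 N, aCoeff p i * x ^ i + x ^ N := by
    have hx1 : x < 1 := hx.trans_lt (sub_lt_self 1 (by positivity))
    exact (Sp_lt_sum_add hp hpos hx1 N).trans_le (by gcongr; exact pow_succ_div_le_pow hx0 hx)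
  refine ⟨?_, hstrict⟩
  rcases hx0.eq_or_lt with rfl | hpos
  · rw [Sp_zero hp]
    exact add_nonneg (Finset.sum_nonneg fun i _ => mul_nonneg (aCoeff_nonneg hp.le i)
      (by positivity)) (by positivity)
  · exact (hstrict hpos).le

theorem stmt7 (p : ℝ) (hp0 : 0 < p) (hp1 : p < 1) (μ : ℝ) (hμ : 0 < μ)
    (N : ℕ) (hN : 1 ≤ N) :
    ∀ x : ℝ, 0 ≤ x → x ≤ 1 - 1 / (N : ℝ) →
      (μ + Sp p x) / (μ + Gpart p N + 1) ≤ rhoN p μ N x ∧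
      (0 < x → (μ + Sp p x) / (μ + Gpart p N + 1) < rhoN p μ N x) := fun x hx0 hx =>
  stmt7_general hp0 (by linarith [Gpart_nonneg hp0.le N]) hx0
    (hx.trans (by gcongr; linarith))
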